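/- Let n ≥ 2 and let M be the n²×n² skew-symmetric integer matrix with rows and columns indexed by pairs [i,j], 1 ≤ i,j ≤ n, in lexicographic order, whose entry h_{[i,j],[s,t]} equals -2 if i < s and j < t, equals 2 if i > s and j > t, and equals 0 otherwise. Then there exists W ∈ SL(n²,ℤ) such that W·M·Wᵗ is the block-diagonal matrix diag(D_1, …, D_{(n²-n)/2}, 0, …, 0), where each D_i is the 2×2 matrix [[0,2],[-2,0]] and the remaining n diagonal entries are 0. -/

import Mathlib

open Matrix

noncomputable section

/-- The exponent `h_{[i,j],[s,t]}` of the quasipolynomial algebra associated to `J^z_q(n)`: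
`-2` if `i < s` and `j < t`, `2` if `i > s` and `j > t`, and `0` otherwise. -/
def hz (i j s t : ℕ) : ℤ :=
  if i < s ∧ j < t then -2 else if s < i ∧ t < j then 2 else 0

/-- The defining matrix of the quasipolynomial algebra of `J^z_q(n)`: the pair `[i,j]`
(0-based) is encoded as the index `i·n + j`, realizing the lexicographic order. -/
def Mz (n : ℕ) : Matrix (Fin (n ^ 2)) (Fin (n ^ 2)) ℤ :=
  Matrix.of fun a b =>
    hz ((a : ℕ) / n) ((a : ℕ) % n) ((b : ℕ) / n) ((b : ℕ) % n)

/-- The canonical form: `diag(D_1, …, D_{(n²-n)/2}, 0, …, 0)` with every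
`D_i = [[0,2],[-2,0]]` and `n` zeros. -/
def Dz (n : ℕ) : Matrix (Fin (n ^ 2)) (Fin (n ^ 2)) ℤ :=
  Matrix.of fun a b =>
    if (a : ℕ) + 1 = (b : ℕ) ∧ (a : ℕ) % 2 = 0 ∧ (b : ℕ) < n ^ 2 - n then 2
    else if (b : ℕ) + 1 = (a : ℕ) ∧ (b : ℕ) % 2 = 0 ∧ (a : ℕ) < n ^ 2 - n then -2
    else 0

/-!
Over a principal ideal domain, an alternating form `B` on a finite free module is an orthogonal sum
of hyperbolic planes and a zero form as soon as every functional vanishing on `ker B` has the form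
`B x`. Indeed, if `B ≠ 0`, write some `B x₀` as `d • g` with `g` taking the value `1`; then `g`
vanishes on `ker B`, so `g = B x` and `B x y = 1` for some `x, y`. The plane spanned by `x, y`
splits off, and its complement inherits the hypothesis.

For half of the defining matrix the hypothesis is verified with `n` kernel vectors `κ_k` and `n`
dual coordinate functionals `ρ_k` such that `f - ∑ k, f κ_k • ρ_k` is an integral combination of
rows for every functional `f`. Mixed second differences of rows identify the coordinate functionals
along each diagonal, further differences identify the `k`-th diagonal above the main one with the
`(n - 1 - k)`-th below, and one single row expresses the main diagonal through the others.
-/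

section Det

variable {R ι : Type*} [CommRing R] [Fintype ι] [DecidableEq ι]

-- Rescaling row `l` of `P` leaves `P * A * Pᵀ` unchanged and corrects the determinant.
theorem exists_specialLinearGroup_congruence {P A D : Matrix ι ι R} (hP : IsUnit P.det)
    (hPA : P * A * Pᵀ = D) {l : ι} (hrow : ∀ j, D l j = 0) (hcol : ∀ i, D i l = 0) :
    ∃ W : Matrix.SpecialLinearGroup ι R, (W : Matrix ι ι R) * A * (W : Matrix ι ι R)ᵀ = D := by
  obtain ⟨u, hu⟩ := hP
  let v : ι → R := Function.update 1 l ↑u⁻¹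
  refine ⟨⟨diagonal v * P, ?_⟩, ?_⟩
  · simp [v, Finset.prod_update_of_mem, ← hu]
  · calc diagonal v * P * A * (diagonal v * P)ᵀ = diagonal v * (P * A * Pᵀ) * diagonal v := by
          simp only [transpose_mul, diagonal_transpose, Matrix.mul_assoc]
      _ = D := by
        ext i j
        rw [hPA, mul_diagonal, diagonal_mul]
        by_cases hi : i = l
        · simp [hi, hrow]
        by_cases hj : j = l
        · simp [hj, hcol]
        simp [v, hi, hj]

end Det

section HyperbolicMatrix

/-- The `k × k` Gram matrix `diag(J, …, J, 0, …, 0)` with `J = [[0, 1], [-1, 0]]` of an orthogonal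
sum of hyperbolic planes and a zero form. The blocks `J` occupy the indices below `m`; if `m` is
odd, the index `m - 1` is left unpaired. -/
def hyperbolicMatrix (R : Type*) [Ring R] (k m : ℕ) : Matrix (Fin k) (Fin k) R :=
  Matrix.of fun i j =>
    if (i : ℕ) + 1 = j ∧ (i : ℕ) % 2 = 0 ∧ (j : ℕ) < m then 1
    else if (j : ℕ) + 1 = i ∧ (j : ℕ) % 2 = 0 ∧ (i : ℕ) < m then -1
    else 0

variable {R : Type*} [Ring R] {k m : ℕ} {l : Fin k}

theorem hyperbolicMatrix_apply_eq_zero_of_le_left (hl : m ≤ l) (j : Fin k) :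
    hyperbolicMatrix R k m l j = 0 := by
  rw [hyperbolicMatrix, of_apply]
  grind

theorem hyperbolicMatrix_apply_eq_zero_of_le_right (hl : m ≤ l) (i : Fin k) :
    hyperbolicMatrix R k m i l = 0 := by
  rw [hyperbolicMatrix, of_apply]
  grind

end HyperbolicMatrix

section HyperbolicPair

open LinearMap (BilinForm)
open Module

variable {R L : Type*} [CommRing R] [AddCommGroup L] [Module R L] {B : BilinForm R L} {x y : L}

/-- The orthogonal complement of the pair `x, y` with respect to `B`. -/
def pairOrthogonal (B : BilinForm R L) (x y : L) : Submodule R L :=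
  LinearMap.ker (B x) ⊓ LinearMap.ker (B y)

theorem mem_pairOrthogonal {z : L} : z ∈ pairOrthogonal B x y ↔ B x z = 0 ∧ B y z = 0 :=
  Iff.rfl

theorem ker_le_pairOrthogonal (hB : B.IsAlt) : LinearMap.ker B ≤ pairOrthogonal B x y := by
  intro z hz
  have hz : B z = 0 := hz
  rw [mem_pairOrthogonal, ← hB.neg_eq z x, ← hB.neg_eq z y, hz]
  simp

/-- The orthogonal splitting of `L` into the hyperbolic plane spanned by `x, y` and the complement
of the pair: `((a, b), z)` corresponds to `a • x + b • y + z`. -/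
def hyperbolicSplitting (hB : B.IsAlt) (hxy : B x y = 1) :
    ((Fin 2 → R) × pairOrthogonal B x y) ≃ₗ[R] L where
  toFun p := p.1 0 • x + p.1 1 • y + p.2
  map_add' p q := by simp only [Prod.fst_add, Prod.snd_add, Pi.add_apply, Submodule.coe_add]; module
  map_smul' c p := by
    simp only [Prod.smul_fst, Prod.smul_snd, Pi.smul_apply, Submodule.coe_smul, RingHom.id_apply,
      smul_eq_mul]
    module
  invFun z := (![-B y z, B x z], ⟨z + B y z • x - B x z • y, by
    simp [mem_pairOrthogonal, hB.self_eq_zero, hxy, ← hB.neg_eq x y]⟩)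
  left_inv := by
    rintro ⟨p, z, hz⟩
    obtain ⟨hxz, hyz⟩ := mem_pairOrthogonal.1 hz
    have hyx : B y x = -1 := by rw [← hB.neg_eq, hxy]
    ext i
    · fin_cases i <;> simp [hB.self_eq_zero, hxy, hyx, hxz, hyz]
    · simp only [map_add, map_smul, hB.self_eq_zero, hxy, hyx, hxz, hyz, smul_eq_mul]
      module
  right_inv z := by simp

theorem hyperbolicSplitting_apply (hB : B.IsAlt) (hxy : B x y = 1)
    (p : (Fin 2 → R) × pairOrthogonal B x y) :
    hyperbolicSplitting hB hxy p = p.1 0 • x + p.1 1 • y + p.2 :=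
  rfl

theorem apply_hyperbolicSplitting (hB : B.IsAlt) (hxy : B x y = 1)
    (p q : (Fin 2 → R) × pairOrthogonal B x y) :
    B (hyperbolicSplitting hB hxy p) (hyperbolicSplitting hB hxy q) =
      p.1 0 * q.1 1 - p.1 1 * q.1 0 + B.restrict _ p.2 q.2 := by
  obtain ⟨p, z, hz⟩ := p
  obtain ⟨q, u, hu⟩ := q
  rw [mem_pairOrthogonal] at hz hu
  have hyx : B y x = -1 := by rw [← hB.neg_eq, hxy]
  have hzx : B z x = 0 := by rw [← hB.neg_eq, hz.1, neg_zero]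
  have hzy : B z y = 0 := by rw [← hB.neg_eq, hz.2, neg_zero]
  simp only [hyperbolicSplitting_apply, map_add, map_smul, LinearMap.add_apply,
    LinearMap.smul_apply, smul_eq_mul, hB.self_eq_zero, hxy, hyx, hzx, hzy, hu.1, hu.2,
    BilinForm.restrict_apply, LinearMap.domRestrict_apply]
  ring

theorem ker_restrict_pairOrthogonal (hB : B.IsAlt) (hxy : B x y = 1) :
    LinearMap.ker (B.restrict (pairOrthogonal B x y)) =
      (LinearMap.ker B).comap (pairOrthogonal B x y).subtype := by
  ext z
  simp only [LinearMap.mem_ker, Submodule.mem_comap, Submodule.subtype_apply]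
  refine ⟨fun h => ?_, fun h => by ext u; simp [h]⟩
  ext u
  obtain ⟨p, rfl⟩ := (hyperbolicSplitting hB hxy).surjective u
  have hz : (z : L) = hyperbolicSplitting hB hxy (0, z) := by simp [hyperbolicSplitting_apply]
  rw [hz, apply_hyperbolicSplitting]
  simp [h]

theorem finrank_ker_restrict_pairOrthogonal (hB : B.IsAlt) (hxy : B x y = 1) :
    finrank R (LinearMap.ker (B.restrict (pairOrthogonal B x y))) =
      finrank R (LinearMap.ker B) := by
  rw [ker_restrict_pairOrthogonal hB hxy]
  exact (Submodule.comapSubtypeEquivOfLe (ker_le_pairOrthogonal hB)).finrank_eq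

theorem dualAnnihilator_ker_restrict_le_range (hB : B.IsAlt) (hxy : B x y = 1)
    (h : (LinearMap.ker B).dualAnnihilator ≤ LinearMap.range B) :
    (LinearMap.ker (B.restrict (pairOrthogonal B x y))).dualAnnihilator ≤
      LinearMap.range (B.restrict (pairOrthogonal B x y)) := by
  intro f hf
  rw [Submodule.mem_dualAnnihilator] at hf
  set e := hyperbolicSplitting hB hxy
  obtain ⟨z, hz⟩ : f ∘ₗ LinearMap.snd R _ _ ∘ₗ e.symm.toLinearMap ∈ LinearMap.range B := by
    refine h ((Submodule.mem_dualAnnihilator _).2 fun u hu => ?_)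
    lift u to pairOrthogonal B x y using ker_le_pairOrthogonal hB hu
    have hu' : e.symm u = (0, u) := by
      simp [LinearEquiv.symm_apply_eq, e, hyperbolicSplitting_apply]
    have : u ∈ LinearMap.ker (B.restrict (pairOrthogonal B x y)) := by
      rwa [ker_restrict_pairOrthogonal hB hxy]
    simpa [hu'] using hf u this
  obtain ⟨p, rfl⟩ := e.surjective z
  refine ⟨p.2, LinearMap.ext fun u => ?_⟩
  have := LinearMap.congr_fun hz (e (0, u))
  rw [apply_hyperbolicSplitting] at this
  simpa using this

/-- The basis `x, y, b 0, b 1, …` of `L`, obtained from a basis `b` of the complement of the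
hyperbolic pair `x, y`. -/
def hyperbolicBasis {k : ℕ} (hB : B.IsAlt) (hxy : B x y = 1)
    (b : Basis (Fin k) R (pairOrthogonal B x y)) : Basis (Fin (2 + k)) R L :=
  (((Pi.basisFun R (Fin 2)).prod b).map (hyperbolicSplitting hB hxy)).reindex finSumFinEquiv

theorem hyperbolicBasis_castAdd {k : ℕ} (hB : B.IsAlt) (hxy : B x y = 1)
    (b : Basis (Fin k) R (pairOrthogonal B x y)) (i : Fin 2) :
    hyperbolicBasis hB hxy b (Fin.castAdd k i) = hyperbolicSplitting hB hxy (Pi.single i 1, 0) := by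
  simp [hyperbolicBasis]

theorem hyperbolicBasis_natAdd {k : ℕ} (hB : B.IsAlt) (hxy : B x y = 1)
    (b : Basis (Fin k) R (pairOrthogonal B x y)) (i : Fin k) :
    hyperbolicBasis hB hxy b (Fin.natAdd 2 i) = hyperbolicSplitting hB hxy (0, b i) := by
  simp [hyperbolicBasis]

theorem toMatrix_hyperbolicBasis {k m : ℕ} (hB : B.IsAlt) (hxy : B x y = 1)
    (b : Basis (Fin k) R (pairOrthogonal B x y))
    (hb : LinearMap.BilinForm.toMatrix b (B.restrict _) = hyperbolicMatrix R k m) :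
    LinearMap.BilinForm.toMatrix (hyperbolicBasis hB hxy b) B =
      hyperbolicMatrix R (2 + k) (2 + m) := by
  ext i j
  rw [LinearMap.BilinForm.toMatrix_apply]
  cases i using Fin.addCases with
  | left i =>
    rw [hyperbolicBasis_castAdd]
    cases j using Fin.addCases with
    | left j =>
      rw [hyperbolicBasis_castAdd, apply_hyperbolicSplitting]
      have hm : 1 < 2 + m := by lia
      fin_cases i <;> fin_cases j <;> simp [hyperbolicMatrix, hm]
    | right j =>
      rw [hyperbolicBasis_natAdd, apply_hyperbolicSplitting]
      have hj : 1 ≠ 2 + (j : ℕ) := by lia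
      fin_cases i <;> simp [hyperbolicMatrix, hj]
  | right i =>
    rw [hyperbolicBasis_natAdd]
    cases j using Fin.addCases with
    | left j =>
      rw [hyperbolicBasis_castAdd, apply_hyperbolicSplitting]
      have hi : 1 ≠ 2 + (i : ℕ) := by lia
      fin_cases j <;> simp [hyperbolicMatrix, hi]
    | right j =>
      have hij : B.restrict _ (b i) (b j) = hyperbolicMatrix R k m i j := by
        rw [← LinearMap.BilinForm.toMatrix_apply, hb]
      rw [hyperbolicBasis_natAdd, apply_hyperbolicSplitting, hij]
      simp only [Pi.zero_apply, mul_zero, sub_zero, zero_add, hyperbolicMatrix, of_apply,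
        Fin.val_natAdd]
      grind

end HyperbolicPair

section Classification

open LinearMap (BilinForm)
open Module

variable {R L : Type*} [CommRing R] [IsDomain R] [IsPrincipalIdealRing R]
  [AddCommGroup L] [Module R L]

theorem exists_eq_smul_and_apply_eq_one {f : Dual R L} (hf : f ≠ 0) :
    ∃ d : R, d ≠ 0 ∧ ∃ (g : Dual R L) (y : L), f = d • g ∧ g y = 1 := by
  let I : Ideal R := LinearMap.range f
  let d := Submodule.IsPrincipal.generator I
  have hd : d ≠ 0 := by
    rwa [Ne, ← Submodule.IsPrincipal.eq_bot_iff_generator_eq_zero, LinearMap.range_eq_bot]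
  have hdvd (z : L) : d ∣ f z :=
    (Submodule.IsPrincipal.mem_iff_generator_dvd I).1 (LinearMap.mem_range_self f z)
  choose g hg using hdvd
  obtain ⟨y, hy⟩ : d ∈ LinearMap.range f := Submodule.IsPrincipal.generator_mem I
  refine ⟨d, hd,
    { toFun := g
      map_add' := fun u v => mul_left_cancel₀ hd ?_
      map_smul' := fun c u => mul_left_cancel₀ hd ?_ }, y, LinearMap.ext hg, mul_left_cancel₀ hd ?_⟩
  · rw [mul_add, ← hg, ← hg, ← hg, map_add]
  · rw [RingHom.id_apply, smul_eq_mul, mul_left_comm, ← hg, ← hg, map_smul, smul_eq_mul]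
  · rw [LinearMap.coe_mk, AddHom.coe_mk, ← hg, hy, mul_one]

theorem exists_apply_apply_eq_one {B : BilinForm R L} (hB : B.IsAlt) (hB0 : B ≠ 0)
    (h : (LinearMap.ker B).dualAnnihilator ≤ LinearMap.range B) : ∃ x y, B x y = 1 := by
  obtain ⟨x₀, hx₀⟩ := DFunLike.ne_iff.1 hB0
  obtain ⟨d, hd, g, y, hg, hgy⟩ := exists_eq_smul_and_apply_eq_one hx₀
  obtain ⟨x, rfl⟩ : g ∈ LinearMap.range B := by
    refine h ((Submodule.mem_dualAnnihilator _).2 fun z hz => ?_)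
    have hz : B z = 0 := hz
    have : d * g z = 0 := by
      rw [← smul_eq_mul, ← LinearMap.smul_apply, ← hg, ← hB.neg_eq, hz]
      simp
    exact (mul_eq_zero.1 this).resolve_left hd
  exact ⟨x, y, hgy⟩

theorem exists_basis_toMatrix_eq_hyperbolicMatrix {k : ℕ} [Module.Free R L] [Module.Finite R L]
    (hk : finrank R L = k) {B : BilinForm R L} (hB : B.IsAlt)
    (h : (LinearMap.ker B).dualAnnihilator ≤ LinearMap.range B) :
    ∃ b : Basis (Fin k) R L, LinearMap.BilinForm.toMatrix b B =
      hyperbolicMatrix R k (k - finrank R (LinearMap.ker B)) := by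
  induction k using Nat.strong_induction_on generalizing L with
  | _ k ih =>
  by_cases hB0 : B = 0
  · have hker : finrank R (LinearMap.ker B) = k := by
      rw [hB0, LinearMap.ker_zero, finrank_top, hk]
    refine ⟨finBasisOfFinrankEq R L hk, ?_⟩
    ext i j
    rw [hker, Nat.sub_self]
    simp [hB0, hyperbolicMatrix]
  obtain ⟨x, y, hxy⟩ := exists_apply_apply_eq_one hB hB0 h
  have hrank : 2 + finrank R (pairOrthogonal B x y) = k := by
    rw [← hk, ← (hyperbolicSplitting hB hxy).finrank_eq, finrank_prod, finrank_fin_fun]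
  obtain ⟨b, hb⟩ := ih _ (by lia) rfl (B := B.restrict (pairOrthogonal B x y))
    (fun z => hB z) (dualAnnihilator_ker_restrict_le_range hB hxy h)
  subst hrank
  have hle := Submodule.finrank_le (LinearMap.ker (B.restrict (pairOrthogonal B x y)))
  rw [finrank_ker_restrict_pairOrthogonal hB hxy] at hle hb
  exact ⟨hyperbolicBasis hB hxy b, by
    rw [toMatrix_hyperbolicBasis hB hxy b hb, Nat.add_sub_assoc hle]⟩

end Classification

section DualFamily

open LinearMap (BilinForm)
open Module

variable {R L ι : Type*} [CommRing R] [AddCommGroup L] [Module R L] [Fintype ι]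
  {B : BilinForm R L} {κ : ι → L} {ρ : ι → Dual R L}

theorem dualAnnihilator_ker_le_range (hκ : ∀ k, B (κ k) = 0)
    (hρ : ∀ f : Dual R L, f ≡ ∑ k, f (κ k) • ρ k [SMOD LinearMap.range B]) :
    (LinearMap.ker B).dualAnnihilator ≤ LinearMap.range B := by
  intro f hf
  rw [Submodule.mem_dualAnnihilator] at hf
  have hfκ (k : ι) : f (κ k) = 0 := hf _ (hκ k)
  simpa [hfκ, SModEq.zero] using hρ f

theorem finrank_ker_eq_card [StrongRankCondition R] [DecidableEq ι] [Module.Projective R L]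
    (hB : B.IsAlt) (hκ : ∀ k, B (κ k) = 0)
    (hρκ : ∀ k l, ρ l (κ k) = if k = l then 1 else 0)
    (hρ : ∀ f : Dual R L, f ≡ ∑ k, f (κ k) • ρ k [SMOD LinearMap.range B]) :
    finrank R (LinearMap.ker B) = Fintype.card ι := by
  have hspan {x : L} (hx : B x = 0) : x = ∑ k, ρ k x • κ k := by
    rw [← sub_eq_zero, ← forall_dual_apply_eq_zero_iff R]
    intro f
    obtain ⟨y, hy⟩ := SModEq.sub_mem.1 (hρ f)
    have := LinearMap.congr_fun hy x
    rw [← hB.neg_eq, hx] at this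
    simpa [mul_comm] using this.symm
  let e : LinearMap.ker B ≃ₗ[R] (ι → R) :=
    { toFun := fun x k => ρ k x
      map_add' := fun x y => by ext; simp
      map_smul' := fun c x => by ext; simp
      invFun := fun c => ⟨∑ k, c k • κ k, by simp [hκ]⟩
      left_inv := fun x => Subtype.ext (hspan x.2).symm
      right_inv := fun c => by ext; simp [hρκ] }
  rw [e.finrank_eq, finrank_fintype_fun_eq_card]

end DualFamily

section Grid

open LinearMap (BilinForm)
open Module

/-- Half the exponent `h_{[i,j],[s,t]}`. -/
def gridEntry (i j s t : ℕ) : ℤ :=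
  if i < s ∧ j < t then -1 else if s < i ∧ t < j then 1 else 0

/-- The alternating form on `ℤ^(n × n)` whose Gram matrix is half of the defining matrix. -/
def gridForm (n : ℕ) : BilinForm ℤ (Fin n × Fin n → ℤ) :=
  Matrix.toBilin' (Matrix.of fun p q => gridEntry p.1 p.2 q.1 q.2)

/-- The row `[i,j]` of the Gram matrix of `gridForm n`, as a functional; `i` and `j` may lie outside
the grid. -/
def gridRow (n i j : ℕ) : Dual ℤ (Fin n × Fin n → ℤ) :=
  ∑ q, gridEntry i j q.1 q.2 • LinearMap.proj q

/-- The coordinate functional at `[i,j]`, which is zero by convention outside the grid. -/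
def gridCoord (n i j : ℕ) : Dual ℤ (Fin n × Fin n → ℤ) :=
  if h : i < n ∧ j < n then LinearMap.proj (⟨i, h.1⟩, ⟨j, h.2⟩) else 0

/-- For `k < n`, the `k`-th basis vector of the kernel of `gridForm n`. It is constant along
diagonals, and its lower right `(n - 1) × (n - 1)` block is the difference of the `k`-th power of a
cyclic permutation matrix and the identity. -/
def gridKernelVector (n k : ℕ) : Fin n × Fin n → ℤ := fun q =>
  (if (q.2 : ℕ) = q.1 + k then 1 else 0) + (if q.2 + (n - 1) = q.1 + k then 1 else 0) -
    (if q.2 = q.1 then 1 else 0)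

/-- For `k < n`, a coordinate functional that takes the value `1` at `gridKernelVector n k` and `0`
at the other kernel vectors. -/
def gridKernelCoord (n k : ℕ) : Dual ℤ (Fin n × Fin n → ℤ) :=
  if k = 0 then gridCoord n (n - 1) 0 else gridCoord n 0 k

variable {n i j k : ℕ}

theorem gridForm_single (p q : Fin n × Fin n) :
    gridForm n (Pi.single p 1) (Pi.single q 1) = gridEntry p.1 p.2 q.1 q.2 := by
  rw [gridForm, Matrix.toBilin'_single, of_apply]

theorem gridRow_apply (x : Fin n × Fin n → ℤ) :
    gridRow n i j x = ∑ q, gridEntry i j q.1 q.2 * x q := by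
  simp [gridRow]

theorem gridRow_single (q : Fin n × Fin n) :
    gridRow n i j (Pi.single q 1) = gridEntry i j q.1 q.2 := by
  simp [gridRow_apply, Pi.single_apply]

theorem gridForm_single_left (p : Fin n × Fin n) :
    gridForm n (Pi.single p 1) = gridRow n p.1 p.2 :=
  (Pi.basisFun ℤ (Fin n × Fin n)).ext fun q => by
    rw [Pi.basisFun_apply, gridForm_single, gridRow_single]

theorem gridRow_mem_range (hi : i < n) (hj : j < n) :
    gridRow n i j ∈ LinearMap.range (gridForm n) :=
  ⟨Pi.single (⟨i, hi⟩, ⟨j, hj⟩) 1, gridForm_single_left _⟩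

theorem isAlt_gridForm (n : ℕ) : (gridForm n).IsAlt := by
  refine LinearMap.isAlt_iff_eq_neg_flip.2 ?_
  refine (Pi.basisFun ℤ _).ext fun p => (Pi.basisFun ℤ _).ext fun q => ?_
  simp only [Pi.basisFun_apply, LinearMap.neg_apply, LinearMap.flip_apply, gridForm_single,
    gridEntry]
  grind

theorem gridCoord_apply (hi : i < n) (hj : j < n) (x : Fin n × Fin n → ℤ) :
    gridCoord n i j x = x (⟨i, hi⟩, ⟨j, hj⟩) := by
  simp [gridCoord, hi, hj]

theorem gridCoord_single (q : Fin n × Fin n) :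
    gridCoord n i j (Pi.single q 1) = if (q.1 : ℕ) = i ∧ (q.2 : ℕ) = j then 1 else 0 := by
  by_cases h : i < n ∧ j < n
  · simp [gridCoord_apply h.1 h.2, Pi.single_apply, Prod.ext_iff, Fin.ext_iff, eq_comm]
  · rw [gridCoord, dif_neg h, LinearMap.zero_apply, if_neg]
    rintro ⟨rfl, rfl⟩
    exact h ⟨q.1.2, q.2.2⟩

theorem gridCoord_sub_gridCoord_diagonal (n i j : ℕ) :
    gridCoord n i j - gridCoord n (i + 1) (j + 1) =
      gridRow n (i + 1) (j + 1) - gridRow n i (j + 1) - gridRow n (i + 1) j + gridRow n i j := by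
  refine (Pi.basisFun ℤ _).ext fun q => ?_
  simp only [Pi.basisFun_apply, LinearMap.sub_apply, LinearMap.add_apply, gridCoord_single,
    gridRow_single, gridEntry]
  grind (splits := 20)

theorem gridCoord_sub_gridCoord_wrap {t : ℕ} (ht : t + 2 < n) :
    gridCoord n 0 (t + 1) - gridCoord n (n - 1) (t + 1) =
      gridRow n (n - 1) (t + 2) - gridRow n (n - 1) (t + 1) -
        gridRow n 0 (t + 1) + gridRow n 0 t := by
  refine (Pi.basisFun ℤ _).ext fun q => ?_
  simp only [Pi.basisFun_apply, LinearMap.sub_apply, LinearMap.add_apply, gridCoord_single,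
    gridRow_single, gridEntry]
  grind (splits := 20)

theorem sum_gridCoord_zero (n : ℕ) :
    ∑ k ∈ Finset.range n, gridCoord (n + 1) 0 k = gridRow (n + 1) 1 n := by
  refine (Pi.basisFun ℤ _).ext fun q => ?_
  simp only [Pi.basisFun_apply, LinearMap.sum_apply, gridCoord_single, gridRow_single, gridEntry]
  by_cases hq : (q.1 : ℕ) = 0
  · simp [hq]
  · simp [hq, show (q.2 : ℕ) ≤ n by lia]

theorem gridRow_zero_left_apply (x : Fin n × Fin n → ℤ) :
    gridRow n 0 j x =
      -∑ t : Fin n, if j < t then ∑ s : Fin n, if 0 < (s : ℕ) then x (s, t) else 0 else 0 := by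
  rw [gridRow_apply, Fintype.sum_prod_type_right, ← Finset.sum_neg_distrib]
  refine Finset.sum_congr rfl fun t _ => ?_
  by_cases ht : j < t <;> simp [gridEntry, ht, ← Finset.sum_neg_distrib, neg_ite]

theorem gridRow_zero_right_apply (x : Fin n × Fin n → ℤ) :
    gridRow n i 0 x =
      -∑ s : Fin n, if i < s then ∑ t : Fin n, if 0 < (t : ℕ) then x (s, t) else 0 else 0 := by
  rw [gridRow_apply, Fintype.sum_prod_type, ← Finset.sum_neg_distrib]
  refine Finset.sum_congr rfl fun s _ => ?_
  by_cases hs : i < s <;> simp [gridEntry, hs, ← Finset.sum_neg_distrib, neg_ite]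

theorem gridRow_apply_eq_zero {x : Fin n × Fin n → ℤ}
    (hdiag : ∀ i j, i + 1 < n → j + 1 < n → gridCoord n i j x = gridCoord n (i + 1) (j + 1) x)
    (hrow : ∀ s : Fin n, 0 < (s : ℕ) → (∑ t : Fin n, if 0 < (t : ℕ) then x (s, t) else 0) = 0)
    (hcol : ∀ t : Fin n, 0 < (t : ℕ) → (∑ s : Fin n, if 0 < (s : ℕ) then x (s, t) else 0) = 0)
    (hi : i < n) (hj : j < n) : gridRow n i j x = 0 := by
  induction i generalizing j with
  | zero =>
    rw [gridRow_zero_left_apply, neg_eq_zero]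
    exact Finset.sum_eq_zero fun t _ => ite_eq_right_iff.2 fun ht => hcol t (by lia)
  | succ i ihi =>
    induction j with
    | zero =>
      rw [gridRow_zero_right_apply, neg_eq_zero]
      exact Finset.sum_eq_zero fun s _ => ite_eq_right_iff.2 fun hs => hrow s (by lia)
    | succ j ihj =>
      have h := LinearMap.congr_fun (gridCoord_sub_gridCoord_diagonal n i j) x
      simp only [LinearMap.sub_apply, LinearMap.add_apply, hdiag i j hi hj, sub_self,
        ihi (by lia) (by lia : j < n), ihi (by lia) hj, ihj (by lia), sub_zero, add_zero] at h
      exact h.symm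

theorem sum_gridKernelVector_row (hk : k < n) (s : Fin n) (hs : 0 < (s : ℕ)) :
    (∑ t : Fin n, if 0 < (t : ℕ) then gridKernelVector n k (s, t) else 0) = 0 := by
  let a : Fin n := ⟨if s + k < n then s + k else s + k - (n - 1), by grind⟩
  have (t : Fin n) : (if 0 < (t : ℕ) then gridKernelVector n k (s, t) else 0) =
      (if t = a then 1 else 0) - (if t = s then 1 else 0) := by
    simp only [gridKernelVector, a, Fin.ext_iff]
    grind
  simp [this]

theorem sum_gridKernelVector_col (hk : k < n) (t : Fin n) (ht : 0 < (t : ℕ)) :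
    (∑ s : Fin n, if 0 < (s : ℕ) then gridKernelVector n k (s, t) else 0) = 0 := by
  let a : Fin n := ⟨if k < t then t - k else t + (n - 1) - k, by grind⟩
  have (s : Fin n) : (if 0 < (s : ℕ) then gridKernelVector n k (s, t) else 0) =
      (if s = a then 1 else 0) - (if s = t then 1 else 0) := by
    simp only [gridKernelVector, a, Fin.ext_iff]
    grind
  simp [this]

theorem gridForm_gridKernelVector (hk : k < n) : gridForm n (gridKernelVector n k) = 0 := by
  refine (Pi.basisFun ℤ _).ext fun q => ?_
  rw [Pi.basisFun_apply, ← (isAlt_gridForm n).neg_eq, gridForm_single_left,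
    gridRow_apply_eq_zero _ (sum_gridKernelVector_row hk) (sum_gridKernelVector_col hk) q.1.2 q.2.2,
    neg_zero, LinearMap.zero_apply]
  intro i j hi hj
  rw [gridCoord_apply hi hj, gridCoord_apply (by lia) (by lia)]
  simp only [gridKernelVector, Fin.ext_iff]
  grind

theorem gridKernelCoord_gridKernelVector (k l : Fin n) :
    gridKernelCoord n l (gridKernelVector n k) = if k = l then 1 else 0 := by
  rw [gridKernelCoord]
  split_ifs <;> rw [gridCoord_apply (by lia) (by lia), gridKernelVector] <;>
    simp only [Fin.ext_iff] <;> grind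

theorem gridCoord_smodEq_succ (hi : i + 1 < n) (hj : j + 1 < n) :
    gridCoord n i j ≡ gridCoord n (i + 1) (j + 1) [SMOD LinearMap.range (gridForm n)] := by
  rw [SModEq.sub_mem, gridCoord_sub_gridCoord_diagonal]
  exact add_mem (sub_mem (sub_mem (gridRow_mem_range hi hj) (gridRow_mem_range (by lia) hj))
    (gridRow_mem_range hi (by lia))) (gridRow_mem_range (by lia) (by lia))

theorem gridCoord_smodEq_add (m : ℕ) (hi : i + m < n) (hj : j + m < n) :
    gridCoord n i j ≡ gridCoord n (i + m) (j + m) [SMOD LinearMap.range (gridForm n)] := by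
  induction m with
  | zero => rfl
  | succ m ih => exact (ih (by lia) (by lia)).trans (gridCoord_smodEq_succ hi hj)

theorem gridCoord_last_smodEq (hk : 0 < k) (hkn : k + 1 < n) :
    gridCoord n (n - 1) k ≡ gridCoord n 0 k [SMOD LinearMap.range (gridForm n)] := by
  obtain ⟨t, rfl⟩ := Nat.exists_eq_add_of_lt hk
  rw [zero_add]
  symm
  rw [SModEq.sub_mem, gridCoord_sub_gridCoord_wrap (by lia)]
  exact add_mem (sub_mem (sub_mem (gridRow_mem_range (by lia) (by lia))
    (gridRow_mem_range (by lia) (by lia))) (gridRow_mem_range (by lia) (by lia)))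
    (gridRow_mem_range (by lia) (by lia))

theorem gridCoord_zero_zero_smodEq (m : ℕ) :
    gridCoord (m + 2) 0 0 ≡ -∑ k : Fin m, gridCoord (m + 2) 0 (k + 1)
      [SMOD LinearMap.range (gridForm (m + 2))] := by
  rw [SModEq.sub_mem, sub_neg_eq_add, add_comm (gridCoord _ _ _),
    Fin.sum_univ_eq_sum_range fun k => gridCoord (m + 2) 0 (k + 1),
    ← Finset.sum_range_succ' fun k => gridCoord (m + 2) 0 k, sum_gridCoord_zero]
  exact gridRow_mem_range (by lia) (by lia)

theorem gridCoord_smodEq_gridKernelCoord (hi : i < n) (hj : j < n) (hij : i ≠ j) :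
    gridCoord n i j ≡ gridKernelCoord n (if i < j then j - i else j + (n - 1) - i)
      [SMOD LinearMap.range (gridForm n)] := by
  rcases hij.lt_or_gt with h | h
  · have := (gridCoord_smodEq_add (n := n) (i := 0) (j := j - i) i (by lia) (by lia)).symm
    simpa [gridKernelCoord, h, h.le, Nat.sub_ne_zero_of_lt h] using this
  · have := gridCoord_smodEq_add (n - 1 - i) (show i + _ < n by lia) (show j + _ < n by lia)
    rw [show i + (n - 1 - i) = n - 1 by lia, show j + (n - 1 - i) = j + (n - 1) - i by lia] at this
    rw [if_neg h.not_gt, gridKernelCoord]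
    split_ifs with h0
    · rwa [h0] at this
    · exact this.trans (gridCoord_last_smodEq (by lia) (by lia))

theorem gridCoord_smodEq_sum (hn : 2 ≤ n) (hi : i < n) (hj : j < n) :
    gridCoord n i j ≡ ∑ k : Fin n, gridCoord n i j (gridKernelVector n k) • gridKernelCoord n k
      [SMOD LinearMap.range (gridForm n)] := by
  by_cases hij : i = j
  · subst hij
    obtain ⟨m, rfl⟩ := Nat.exists_eq_add_of_le' hn
    have h0 := gridCoord_smodEq_add (n := m + 2) (i := 0) (j := 0) i (by lia) (by lia)
    rw [zero_add] at h0
    convert h0.symm.trans (gridCoord_zero_zero_smodEq m) using 1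
    rw [Fin.sum_univ_succ, Fin.sum_univ_castSucc, ← Finset.sum_neg_distrib]
    have (k : Fin m) : m ≠ k := k.2.ne'
    simp [gridCoord_apply hi hi, gridKernelVector, gridKernelCoord, add_comm, this]
  · convert gridCoord_smodEq_gridKernelCoord hi hj hij using 1
    let a : Fin n := ⟨if i < j then j - i else j + (n - 1) - i, by grind⟩
    have (k : Fin n) : gridCoord n i j (gridKernelVector n k) = if k = a then 1 else 0 := by
      rw [gridCoord_apply hi hj]
      simp only [gridKernelVector, a, Fin.ext_iff]
      grind
    simp [this, a]

theorem smodEq_sum_gridKernelCoord (hn : 2 ≤ n) (f : Dual ℤ (Fin n × Fin n → ℤ)) :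
    f ≡ ∑ k : Fin n, f (gridKernelVector n k) • gridKernelCoord n k
      [SMOD LinearMap.range (gridForm n)] := by
  have hf : f = ∑ q : Fin n × Fin n, f (Pi.single q 1) • gridCoord n q.1 q.2 := by
    refine (Pi.basisFun ℤ _).ext fun q => ?_
    simp [gridCoord_apply, Pi.single_apply]
  have hsum : ∑ k : Fin n, f (gridKernelVector n k) • gridKernelCoord n k =
      ∑ q : Fin n × Fin n, f (Pi.single q 1) •
        ∑ k : Fin n, gridCoord n q.1 q.2 (gridKernelVector n k) • gridKernelCoord n k := by
    nth_rw 1 [hf]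
    simp only [LinearMap.sum_apply, LinearMap.smul_apply, Finset.sum_smul, Finset.smul_sum,
      smul_eq_mul, mul_smul]
    exact Finset.sum_comm
  rw [hsum]
  nth_rw 1 [hf]
  exact SModEq.sum fun q _ => (gridCoord_smodEq_sum hn q.1.2 q.2.2).smul _

theorem exists_basis_toMatrix_gridForm {n : ℕ} (hn : 2 ≤ n) :
    ∃ b : Basis (Fin (n ^ 2)) ℤ (Fin n × Fin n → ℤ),
      LinearMap.BilinForm.toMatrix b (gridForm n) = hyperbolicMatrix ℤ (n ^ 2) (n ^ 2 - n) := by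
  have hκ (k : Fin n) : gridForm n (gridKernelVector n k) = 0 := gridForm_gridKernelVector k.2
  have hker := finrank_ker_eq_card (isAlt_gridForm n) hκ gridKernelCoord_gridKernelVector
    (smodEq_sum_gridKernelCoord hn)
  rw [Fintype.card_fin] at hker
  have := exists_basis_toMatrix_eq_hyperbolicMatrix (k := n ^ 2) (by simp [sq]) (isAlt_gridForm n)
    (dualAnnihilator_ker_le_range hκ (smodEq_sum_gridKernelCoord hn))
  rwa [hker] at this

end Grid

section Lexicographic

open Module

/-- The standard basis of `ℤ^(n × n)`, in the lexicographic order of the index pairs. -/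
def lexBasis (n : ℕ) : Basis (Fin (n ^ 2)) ℤ (Fin n × Fin n → ℤ) :=
  (Pi.basisFun ℤ _).reindex (finProdFinEquiv.trans (finCongr (sq n).symm))

theorem hz_eq_two_mul_gridEntry (i j s t : ℕ) : hz i j s t = 2 * gridEntry i j s t := by
  simp only [hz, gridEntry]
  grind

theorem Mz_eq_smul_toMatrix (n : ℕ) :
    Mz n = (2 : ℤ) • LinearMap.BilinForm.toMatrix (lexBasis n) (gridForm n) := by
  ext a b
  simp [Mz, hz_eq_two_mul_gridEntry, LinearMap.BilinForm.toMatrix_apply, lexBasis, gridForm_single]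

theorem Dz_eq_smul_hyperbolicMatrix (n : ℕ) :
    Dz n = (2 : ℤ) • hyperbolicMatrix ℤ (n ^ 2) (n ^ 2 - n) := by
  ext a b
  simp only [Dz, hyperbolicMatrix, of_apply, Matrix.smul_apply]
  grind

end Lexicographic

theorem stmt6 (n : ℕ) (hn : 2 ≤ n) :
    ∃ W : Matrix.SpecialLinearGroup (Fin (n ^ 2)) ℤ,
      (W : Matrix (Fin (n ^ 2)) (Fin (n ^ 2)) ℤ) * Mz n *
          (W : Matrix (Fin (n ^ 2)) (Fin (n ^ 2)) ℤ)ᵀ =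
        Dz n := by
  obtain ⟨b, hb⟩ := exists_basis_toMatrix_gridForm hn
  let P := ((lexBasis n).toMatrix b)ᵀ
  have hP : IsUnit P.det := by
    rw [det_transpose, ← Module.Basis.det_apply]
    exact (lexBasis n).isUnit_det b
  have hPMP : P * Mz n * Pᵀ = Dz n := by
    rw [Mz_eq_smul_toMatrix, Dz_eq_smul_hyperbolicMatrix, ← hb, transpose_transpose,
      Matrix.mul_smul, Matrix.smul_mul, LinearMap.BilinForm.toMatrix_mul_basis_toMatrix]
  let l : Fin (n ^ 2) := ⟨n ^ 2 - 1, Nat.sub_one_lt (by positivity)⟩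
  have hl : n ^ 2 - n ≤ l := Nat.sub_le_sub_left (by lia) _
  refine exists_specialLinearGroup_congruence hP hPMP (l := l) (fun j => ?_) (fun i => ?_)
  · rw [Dz_eq_smul_hyperbolicMatrix, Matrix.smul_apply,
      hyperbolicMatrix_apply_eq_zero_of_le_left hl, smul_zero]
  · rw [Dz_eq_smul_hyperbolicMatrix, Matrix.smul_apply,
      hyperbolicMatrix_apply_eq_zero_of_le_right hl, smul_zero]
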